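/- Let n ≥ 2 and let t : {1,…,2n} → {A,B} be a type assignment with t(1)=B, t(2n−1)=A, t(2n)=B, and t(i)=B for some i with 1 < i < 2n−1. Then every stable matching of the instance contains the pair {1,2n−1}, and the stable matchings of the instance are exactly the sets M' ∪ {{1,2n−1}} where M' ranges over the stable matchings of the restricted 1-attribute instance on {2,…,2n−2} ∪ {2n}. -/

import Mathlib

/-!
Write `N = 2n`. Person `N - 1` has type `A`, so person `1` is their first choice; person `1` has type
`B`, so only `N` is ranked above `N - 1`. If a stable matching omitted `{1, N - 1}`, this pair would
block unless `1` were matched to `N`. In that case `N` has their last choice, while any type-`B`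
person `i` with `1 < i < N - 1` has `N` as first choice, so `{i, N}` blocks. Hence every stable
matching contains `{1, N - 1}` (`pair_mem_of_isStable`).

Removing this pair keeps matchings and stability, since partners of the others are unchanged.
Conversely, adding it to a stable matching of the remaining people creates no blocking pair: `N - 1`
has their first choice, `1` would only leave for `N`, and `N` ranks `1` last
(`not_isBlocking_one`, `not_isBlocking_pred`).
-/

/-- The two preference types in the 1-attribute stable roommate model. -/
inductive AttrType : Type
  | A : AttrType
  | B : AttrType
  deriving DecidableEq

/-- In the 1-attribute instance with type assignment `t`, person `i`
prefers person `j` to person `k`: type `A` people prefer smaller indices,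
type `B` people prefer larger indices. -/
def Prefers (t : ℕ → AttrType) (i j k : ℕ) : Prop :=
  match t i with
  | AttrType.A => j < k
  | AttrType.B => k < j

/-- `M` is a matching of the people in `S`: a partition of `S` into
unordered pairs. -/
def IsMatching (S : Finset ℕ) (M : Finset (Finset ℕ)) : Prop :=
  (∀ p ∈ M, ∃ i j, i ≠ j ∧ i ∈ S ∧ j ∈ S ∧ p = {i, j}) ∧
  (∀ i ∈ S, ∃! p, p ∈ M ∧ i ∈ p)

/-- The pair `{i, j}` is a blocking pair for the matching `M`:
it is not in `M`, and each of `i`, `j` prefers the other to their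
partner in `M`. -/
def IsBlocking (t : ℕ → AttrType) (M : Finset (Finset ℕ)) (i j : ℕ) : Prop :=
  i ≠ j ∧ ({i, j} : Finset ℕ) ∉ M ∧
  (∀ k, ({i, k} : Finset ℕ) ∈ M → k ≠ i → Prefers t i j k) ∧
  (∀ k, ({j, k} : Finset ℕ) ∈ M → k ≠ j → Prefers t j i k)

/-- `M` is a stable matching of the 1-attribute instance on the set of
people `S` with type assignment `t`. -/
def IsStable (t : ℕ → AttrType) (S : Finset ℕ) (M : Finset (Finset ℕ)) : Prop :=
  IsMatching S M ∧ ∀ i ∈ S, ∀ j ∈ S, ¬ IsBlocking t M i j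

lemma prefers_of_A {t : ℕ → AttrType} {i j k : ℕ} (h : t i = AttrType.A) :
    Prefers t i j k ↔ j < k := by
  simp [Prefers, h]

lemma prefers_of_B {t : ℕ → AttrType} {i j k : ℕ} (h : t i = AttrType.B) :
    Prefers t i j k ↔ k < j := by
  simp [Prefers, h]

lemma IsBlocking.symm {t : ℕ → AttrType} {M : Finset (Finset ℕ)} {i j : ℕ}
    (h : IsBlocking t M i j) : IsBlocking t M j i :=
  ⟨h.1.symm, by rw [Finset.pair_comm]; exact h.2.1, h.2.2.2, h.2.2.1⟩

lemma IsMatching.exists_partner {S : Finset ℕ} {M : Finset (Finset ℕ)} (h : IsMatching S M)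
    {i : ℕ} (hi : i ∈ S) : ∃ k ∈ S, k ≠ i ∧ ({i, k} : Finset ℕ) ∈ M := by
  obtain ⟨p, ⟨hp, hip⟩, -⟩ := h.2 i hi
  obtain ⟨a, b, hab, ha, hb, rfl⟩ := h.1 p hp
  rcases Finset.mem_insert.1 hip with rfl | hib
  · exact ⟨b, hb, hab.symm, hp⟩
  · obtain rfl := Finset.mem_singleton.1 hib
    exact ⟨a, ha, hab, by rwa [Finset.pair_comm]⟩

lemma IsMatching.subset {S : Finset ℕ} {M : Finset (Finset ℕ)} (h : IsMatching S M)
    {p : Finset ℕ} (hp : p ∈ M) : p ⊆ S := by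
  obtain ⟨a, b, -, ha, hb, rfl⟩ := h.1 p hp
  simp [Finset.insert_subset_iff, ha, hb]

lemma IsMatching.eq_of_mem {S : Finset ℕ} {M : Finset (Finset ℕ)} (h : IsMatching S M)
    {p q : Finset ℕ} {i : ℕ} (hp : p ∈ M) (hq : q ∈ M) (hip : i ∈ p) (hiq : i ∈ q) : p = q :=
  (h.2 i (h.subset hp hip)).unique ⟨hp, hip⟩ ⟨hq, hiq⟩

lemma IsMatching.partner_unique {S : Finset ℕ} {M : Finset (Finset ℕ)} (h : IsMatching S M)
    {i k l : ℕ} (hk : ({i, k} : Finset ℕ) ∈ M) (hl : ({i, l} : Finset ℕ) ∈ M)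
    (hki : k ≠ i) : k = l := by
  have hkl : k ∈ ({i, l} : Finset ℕ) := by
    rw [← h.eq_of_mem hk hl (i := i) (by simp) (by simp)]
    simp
  simpa [hki] using hkl

lemma IsMatching.erase {S : Finset ℕ} {M : Finset (Finset ℕ)} {a b : ℕ}
    (ha : a ∉ S) (hb : b ∉ S) (h : IsMatching (insert a (insert b S)) M)
    (hab : ({a, b} : Finset ℕ) ∈ M) : IsMatching S (M.erase {a, b}) := by
  refine ⟨fun p hp => ?_, fun i hi => ?_⟩
  · obtain ⟨hne, hpM⟩ := Finset.mem_erase.1 hp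
    obtain ⟨i, j, hij, hi, hj, rfl⟩ := h.1 p hpM
    -- A member of a pair other than `{a, b}` is neither `a` nor `b`.
    have key : ∀ x ∈ ({i, j} : Finset ℕ), x ∈ insert a (insert b S) → x ∈ S := by
      intro x hx hxS
      by_contra hxn
      refine hne (h.eq_of_mem hpM hab hx ?_)
      simp only [Finset.mem_insert, Finset.mem_singleton] at hxS ⊢
      tauto
    exact ⟨i, j, hij, key i (by simp) hi, key j (by simp) hj, rfl⟩
  · obtain ⟨p, ⟨hp, hip⟩, huniq⟩ := h.2 i (by simp [hi])
    refine ⟨p, ⟨Finset.mem_erase.2 ⟨?_, hp⟩, hip⟩,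
      fun q hq => huniq q ⟨Finset.mem_of_mem_erase hq.1, hq.2⟩⟩
    rintro rfl
    simp only [Finset.mem_insert, Finset.mem_singleton] at hip
    rcases hip with rfl | rfl <;> contradiction

lemma IsMatching.union_pair {S : Finset ℕ} {M : Finset (Finset ℕ)} {a b : ℕ} (hne : a ≠ b)
    (ha : a ∉ S) (hb : b ∉ S) (h : IsMatching S M) :
    IsMatching (insert a (insert b S)) (M ∪ {{a, b}}) := by
  refine ⟨fun p hp => ?_, fun i hi => ?_⟩
  · rcases Finset.mem_union.1 hp with hp | hp
    · obtain ⟨i, j, hij, hi, hj, rfl⟩ := h.1 p hp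
      exact ⟨i, j, hij, by simp [hi], by simp [hj], rfl⟩
    · exact ⟨a, b, hne, by simp, by simp, Finset.mem_singleton.1 hp⟩
  · by_cases hiS : i ∈ S
    · obtain ⟨p, ⟨hp, hip⟩, huniq⟩ := h.2 i hiS
      refine ⟨p, ⟨Finset.mem_union_left _ hp, hip⟩, ?_⟩
      rintro q ⟨hq, hiq⟩
      rcases Finset.mem_union.1 hq with hq | hq
      · exact huniq q ⟨hq, hiq⟩
      · rw [Finset.mem_singleton.1 hq] at hiq
        simp only [Finset.mem_insert, Finset.mem_singleton] at hiq
        rcases hiq with rfl | rfl <;> contradiction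
    · refine ⟨{a, b}, ⟨by simp, ?_⟩, ?_⟩
      · simp only [Finset.mem_insert, Finset.mem_singleton] at hi ⊢
        tauto
      · rintro q ⟨hq, hiq⟩
        rcases Finset.mem_union.1 hq with hq | hq
        · exact absurd (h.subset hq hiq) hiS
        · exact Finset.mem_singleton.1 hq

/-- Blocking by two people depends only on the pairs of the matching that contain one of them, so
a pair avoiding both can be added or removed freely. -/
lemma IsBlocking.congr {t : ℕ → AttrType} {M M' : Finset (Finset ℕ)} {i j : ℕ}
    (hM : ∀ p : Finset ℕ, i ∈ p ∨ j ∈ p → (p ∈ M ↔ p ∈ M')) (h : IsBlocking t M i j) :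
    IsBlocking t M' i j := by
  obtain ⟨hij, hnot, h1, h2⟩ := h
  refine ⟨hij, ?_, fun k hk => h1 k ?_, fun k hk => h2 k ?_⟩
  · rwa [← hM _ (by simp)]
  · rwa [hM _ (by simp)]
  · rwa [hM _ (by simp)]

lemma pair_mem_of_isStable {n : ℕ} (hn : 2 ≤ n) {t : ℕ → AttrType}
    (h1 : t 1 = AttrType.B) (h2 : t (2 * n - 1) = AttrType.A)
    (h3 : t (2 * n) = AttrType.B)
    (hi : ∃ i, 1 < i ∧ i < 2 * n - 1 ∧ t i = AttrType.B)
    {M : Finset (Finset ℕ)} (hM : IsStable t (Finset.Icc 1 (2 * n)) M) :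
    ({1, 2 * n - 1} : Finset ℕ) ∈ M := by
  obtain ⟨hmat, hst⟩ := hM
  by_contra hnot
  have hpos : ∀ {i k : ℕ}, ({i, k} : Finset ℕ) ∈ M → 1 ≤ k ∧ k ≤ 2 * n := fun {i k} hk =>
    Finset.mem_Icc.1 (hmat.subset hk (by simp))
  -- If `1` were not matched to `2 * n`, then `{1, 2 * n - 1}` would block.
  have hN : ({1, 2 * n} : Finset ℕ) ∈ M := by
    by_contra hN
    refine hst 1 (by simp; omega) (2 * n - 1) (by simp; omega)
      ⟨by omega, hnot, fun k hk hk1 => ?_, fun k hk hk1 => ?_⟩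
    · rw [prefers_of_B h1]
      have hb := hpos hk
      have hk2 : k ≠ 2 * n - 1 := by rintro rfl; exact hnot hk
      have hk3 : k ≠ 2 * n := by rintro rfl; exact hN hk
      omega
    · rw [prefers_of_A h2]
      have hb := hpos hk
      have hk2 : k ≠ 1 := by rintro rfl; exact hnot (by rwa [Finset.pair_comm])
      omega
  obtain ⟨i, hi1, hi2, hti⟩ := hi
  have hN' : ({2 * n, 1} : Finset ℕ) ∈ M := by rwa [Finset.pair_comm]
  have huniq : ∀ k, ({2 * n, k} : Finset ℕ) ∈ M → k = 1 := fun k hk =>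
    (hmat.partner_unique hN' hk (by omega)).symm
  have hiN : ({i, 2 * n} : Finset ℕ) ∉ M := by
    intro h
    rw [Finset.pair_comm] at h
    have := huniq i h
    omega
  refine hst i (by simp; omega) (2 * n) (by simp; omega)
    ⟨by omega, hiN, fun k hk hk1 => ?_, fun k hk hk1 => ?_⟩
  · rw [prefers_of_B hti]
    have hb := hpos hk
    have hk2 : k ≠ 2 * n := by rintro rfl; exact hiN hk
    omega
  · rw [prefers_of_B h3, huniq k hk]
    exact hi1

/-- Once `1` is matched to `2 * n - 1`, the only improvement for `1` is `2 * n`, who ranks `1`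
last. -/
lemma not_isBlocking_one {n : ℕ} (hn : 2 ≤ n) {t : ℕ → AttrType}
    (h1 : t 1 = AttrType.B) (h3 : t (2 * n) = AttrType.B) {M : Finset (Finset ℕ)}
    (hM : IsMatching (Finset.Icc 1 (2 * n)) M) (hp : ({1, 2 * n - 1} : Finset ℕ) ∈ M)
    {j : ℕ} (hj : j ∈ Finset.Icc 1 (2 * n)) : ¬ IsBlocking t M 1 j := by
  rintro ⟨-, -, hb1, hb2⟩
  have hlt := (prefers_of_B h1).1 (hb1 _ hp (by omega))
  have hjN : j = 2 * n := by
    have := Finset.mem_Icc.1 hj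
    omega
  subst hjN
  obtain ⟨k, hk, hkN, hkM⟩ := hM.exists_partner hj
  have hk1 := (prefers_of_B h3).1 (hb2 k hkM hkN)
  have := (Finset.mem_Icc.1 hk).1
  omega

/-- Person `2 * n - 1` cannot improve on being matched to `1`. -/
lemma not_isBlocking_pred {n : ℕ} (hn : 2 ≤ n) {t : ℕ → AttrType}
    (h2 : t (2 * n - 1) = AttrType.A) {M : Finset (Finset ℕ)}
    (hp : ({1, 2 * n - 1} : Finset ℕ) ∈ M)
    {j : ℕ} (hj : j ∈ Finset.Icc 1 (2 * n)) : ¬ IsBlocking t M (2 * n - 1) j := by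
  rintro ⟨-, -, hb1, -⟩
  have hlt := (prefers_of_A h2).1 (hb1 1 (by rwa [Finset.pair_comm]) (by omega))
  have := (Finset.mem_Icc.1 hj).1
  omega

/-- Case (S2): types 1B, (2n-1)A, (2n)B and iB for some 1 < i < 2n-1.  Every
stable matching contains the pair {1,2n-1}, and the stable matchings are
exactly the stable matchings of the restricted instance on
{2,…,2n-2} ∪ {2n} together with {1,2n-1}. -/
theorem one_attribute_case_S2 (n : ℕ) (hn : 2 ≤ n) (t : ℕ → AttrType)
    (h1 : t 1 = AttrType.B) (h2 : t (2 * n - 1) = AttrType.A)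
    (h3 : t (2 * n) = AttrType.B)
    (hi : ∃ i, 1 < i ∧ i < 2 * n - 1 ∧ t i = AttrType.B) :
    (∀ M : Finset (Finset ℕ), IsStable t (Finset.Icc 1 (2 * n)) M →
      ({1, 2 * n - 1} : Finset ℕ) ∈ M) ∧
    (∀ M : Finset (Finset ℕ), IsStable t (Finset.Icc 1 (2 * n)) M ↔
      ∃ M' : Finset (Finset ℕ),
        IsStable t (insert (2 * n) (Finset.Icc 2 (2 * n - 2))) M' ∧
        M = M' ∪ {({1, 2 * n - 1} : Finset ℕ)}) := by
  have hS : Finset.Icc 1 (2 * n) =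
      insert 1 (insert (2 * n - 1) (insert (2 * n) (Finset.Icc 2 (2 * n - 2)))) := by
    ext x
    simp only [Finset.mem_insert, Finset.mem_Icc]
    omega
  have ha : 1 ∉ insert (2 * n) (Finset.Icc 2 (2 * n - 2)) := by
    simp only [Finset.mem_insert, Finset.mem_Icc]
    omega
  have hb : 2 * n - 1 ∉ insert (2 * n) (Finset.Icc 2 (2 * n - 2)) := by
    simp only [Finset.mem_insert, Finset.mem_Icc]
    omega
  have hmem : ∀ x ∈ insert (2 * n) (Finset.Icc 2 (2 * n - 2)), x ∈ Finset.Icc 1 (2 * n) := by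
    intro x hx
    rw [hS]
    exact Finset.mem_insert_of_mem (Finset.mem_insert_of_mem hx)
  have hnotin : ∀ x ∈ insert (2 * n) (Finset.Icc 2 (2 * n - 2)),
      x ∉ ({1, 2 * n - 1} : Finset ℕ) := by
    intro x hx hx'
    simp only [Finset.mem_insert, Finset.mem_singleton] at hx'
    rcases hx' with rfl | rfl
    · exact ha hx
    · exact hb hx
  refine ⟨fun M hM => pair_mem_of_isStable hn h1 h2 h3 hi hM, fun M => ⟨fun hM => ?_, ?_⟩⟩
  · have hp := pair_mem_of_isStable hn h1 h2 h3 hi hM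
    obtain ⟨hmat, hst⟩ := hM
    refine ⟨M.erase {1, 2 * n - 1}, ⟨(hS ▸ hmat).erase ha hb hp, ?_⟩, ?_⟩
    · intro i hiS j hjS hbl
      refine hst i (hmem i hiS) j (hmem j hjS) (hbl.congr fun p hpij => ?_)
      have hne : p ≠ {1, 2 * n - 1} := by
        rintro rfl
        exact hpij.elim (hnotin i hiS) (hnotin j hjS)
      simp [hne]
    · rw [Finset.union_comm, ← Finset.insert_eq, Finset.insert_erase hp]
  · rintro ⟨M', ⟨hmat', hst'⟩, rfl⟩
    have hp : ({1, 2 * n - 1} : Finset ℕ) ∈ M' ∪ {({1, 2 * n - 1} : Finset ℕ)} := by simp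
    have hmat : IsMatching (Finset.Icc 1 (2 * n)) (M' ∪ {({1, 2 * n - 1} : Finset ℕ)}) := by
      rw [hS]
      exact hmat'.union_pair (by omega) ha hb
    refine ⟨hmat, fun i hiS j hjS hbl => ?_⟩
    -- Neither member of `{1, 2 * n - 1}` takes part in a blocking pair.
    have key : ∀ x ∈ Finset.Icc 1 (2 * n), ∀ y ∈ Finset.Icc 1 (2 * n),
        IsBlocking t (M' ∪ {({1, 2 * n - 1} : Finset ℕ)}) x y →
        x ∈ insert (2 * n) (Finset.Icc 2 (2 * n - 2)) := by
      intro x hx y hy hxy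
      rw [hS, Finset.mem_insert, Finset.mem_insert] at hx
      rcases hx with rfl | rfl | hx
      · exact absurd hxy (not_isBlocking_one hn h1 h3 hmat hp hy)
      · exact absurd hxy (not_isBlocking_pred hn h2 hp hy)
      · exact hx
    have hi' := key i hiS j hjS hbl
    have hj' := key j hjS i hiS hbl.symm
    refine hst' i hi' j hj' (hbl.congr fun p hpij => ?_)
    have hne : p ≠ {1, 2 * n - 1} := by
      rintro rfl
      exact hpij.elim (hnotin i hi') (hnotin j hj')
    simp [hne]
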